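/- Let 1 ≤ s ≤ S < p/2 with S ≥ 2, let u > 1, and set t = S·max{ √(4u·log S/(n(p−S))), 8u·log S/(n(p−S)) }. Consider the test Δ that rejects if and only if ∑_{i=1}^{S} |Tr(A_i(Σ_n − I_p))| ≥ t. If σ ≥ t + max{ √(4(u−1)(2s+1)·log S/(n(p−S))), 8(u−1)(2s+1)·log S/(n(p−S)) }, then P_{I_p}[Δ rejects] + sup_{Σ ∈ F(s,S,σ)} P_Σ[Δ accepts] ≤ 4·exp(−(u−1)·log S), where P_{I_p} (resp. P_Σ) denotes the law of Σ_n when X_1,…,X_n are i.i.d. N_p(0, I_p) (resp. N_p(0, Σ)). -/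

import Mathlib

open MeasureTheory Matrix Real
open scoped ENNReal BigOperators NNReal

noncomputable def gaussianPDF {p : ℕ} (C : Matrix (Fin p) (Fin p) ℝ) (x : Fin p → ℝ) : ℝ≥0∞ :=
  ENNReal.ofReal ((2 * Real.pi) ^ (-(p : ℝ) / 2) * C.det ^ (-(1:ℝ)/2) *
    Real.exp (-(1/2) * (x ⬝ᵥ C⁻¹.mulVec x)))

/-- The centered multivariate Gaussian measure `N_p(0, C)` on `Fin p → ℝ`. -/
noncomputable def gaussianMeasure {p : ℕ} (C : Matrix (Fin p) (Fin p) ℝ) :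
    Measure (Fin p → ℝ) :=
  MeasureTheory.volume.withDensity (gaussianPDF C)

/-- The law of `n` i.i.d. `N_p(0, C)` vectors. -/
noncomputable def iidGaussian (n p : ℕ) (C : Matrix (Fin p) (Fin p) ℝ) :
    Measure (Fin n → Fin p → ℝ) :=
  MeasureTheory.volume.withDensity fun X => ∏ k, gaussianPDF C (X k)

/-- The sample covariance matrix `Σ_n = (1/n) ∑ X_k X_kᵀ`. -/
noncomputable def sampleCov {n p : ℕ} (X : Fin n → Fin p → ℝ) :
    Matrix (Fin p) (Fin p) ℝ :=
  (n : ℝ)⁻¹ • ∑ k, Matrix.of fun i j => X k i * X k j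

/-- Frobenius norm of a matrix. -/
noncomputable def frobNorm {p : ℕ} (M : Matrix (Fin p) (Fin p) ℝ) : ℝ :=
  Real.sqrt (∑ i, ∑ j, (M i j)^2)

/-- Spectral (ℓ²-operator) norm of a matrix. -/
noncomputable def specNorm {p : ℕ} (M : Matrix (Fin p) (Fin p) ℝ) : ℝ :=
  ‖Matrix.toEuclideanCLM (𝕜 := ℝ) M‖

/-- The matrix `A_j` with entries `1/(2(p-j))` on the `j`-th upper and lower diagonals. -/
noncomputable def lagMatrix (p j : ℕ) : Matrix (Fin p) (Fin p) ℝ :=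
  Matrix.of fun k l => if ((k:ℤ) - (l:ℤ)).natAbs = j then 1/(2*((p:ℝ) - j)) else 0

/-- Two-sided class `F(s,S,σ)` of sparse Toeplitz covariance matrices with
diagonal value `σ0`. -/
def memF (p s S : ℕ) (σ σ0 : ℝ) (C : Matrix (Fin p) (Fin p) ℝ) : Prop :=
  C.PosDef ∧ ∃ v : ℕ → ℝ, v 0 = σ0 ∧
    (∀ i j : Fin p, C i j = v ((i:ℤ) - (j:ℤ)).natAbs) ∧
    ∃ T : Finset ℕ, T ⊆ Finset.Icc 1 S ∧ T.card = s ∧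
      (∀ j ∈ T, σ ≤ |v j|) ∧ (∀ j, 1 ≤ j → j ≤ p - 1 → j ∉ T → v j = 0)

/-- One-sided class `F₊(s,S,σ)` of sparse Toeplitz covariance matrices with
diagonal value `σ0`. -/
def memFplus (p s S : ℕ) (σ σ0 : ℝ) (C : Matrix (Fin p) (Fin p) ℝ) : Prop :=
  C.PosDef ∧ ∃ v : ℕ → ℝ, v 0 = σ0 ∧
    (∀ i j : Fin p, C i j = v ((i:ℤ) - (j:ℤ)).natAbs) ∧
    ∃ T : Finset ℕ, T ⊆ Finset.Icc 1 S ∧ T.card = s ∧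
      (∀ j ∈ T, σ ≤ v j) ∧ (∀ j, 1 ≤ j → j ≤ p - 1 → j ∉ T → v j = 0)

theorem lintegral_fin_prod_eq_prod {α : Type*} [MeasureSpace α] [SigmaFinite (volume : Measure α)]
    {n : ℕ} (f : Fin n → α → ℝ≥0∞) (hf : ∀ i, Measurable (f i)) :
    ∫⁻ x : Fin n → α, ∏ i, f i (x i) = ∏ i, ∫⁻ y, f i y := by
  induction n with
  | zero => simp [volume_pi]
  | succ n ih =>
    rw [← (volume_preserving_piFinSuccAbove (fun _ : Fin (n + 1) => α) 0).symm.lintegral_comp_emb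
      (MeasurableEquiv.measurableEmbedding _)]
    simp only [MeasurableEquiv.piFinSuccAbove_symm_apply, Fin.insertNthEquiv_zero,
      Fin.prod_univ_succ, Fin.consEquiv_apply, Fin.cons_zero, Fin.cons_succ]
    rw [Measure.volume_eq_prod, lintegral_prod_mul (f := f 0)
      (g := fun z : Fin n → α => ∏ i : Fin n, f i.succ (z i))
      (hf 0).aemeasurable (Finset.measurable_prod _ fun i _ =>
      (hf i.succ).comp (measurable_pi_apply i)).aemeasurable, ih _ fun i => hf i.succ]

theorem neg_half_log_one_sub_le {a b : ℝ} (hab : |a| ≤ b) (hb : b < 1 / 2) :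
    -(1 / 2) * Real.log (1 - 2 * a) ≤ a + a ^ 2 / (1 - 2 * b) := by
  have hb0 : 0 ≤ b := (abs_nonneg a).trans hab
  have hab' := abs_le.1 hab
  have hc : 0 < 1 - 2 * b := by linarith
  rcases le_total 0 a with ha | ha
  · have hd : 0 < 1 - 2 * a := by linarith
    have h := Real.self_le_sinh_iff.2 (neg_nonneg.2 (Real.log_nonpos hd.le (by linarith)))
    rw [Real.sinh_eq, neg_neg, Real.exp_neg, Real.exp_log hd] at h
    have h2 : a ^ 2 / (1 - 2 * a) ≤ a ^ 2 / (1 - 2 * b) := by gcongr; exact hab'.2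
    have h3 : ((1 - 2 * a)⁻¹ - (1 - 2 * a)) / 2 / 2 = a + a ^ 2 / (1 - 2 * a) := by
      field_simp
      ring
    linarith
  · have h := Real.le_log_one_add_of_nonneg (x := -2 * a) (by linarith)
    rw [show 1 + -2 * a = 1 - 2 * a by ring] at h
    have h1 : a ^ 2 / 1 ≤ a ^ 2 / (1 - 2 * b) := by gcongr; linarith
    have h2 : -(2 * (a + a ^ 2)) ≤ 2 * (-2 * a) / (-2 * a + 2) := by
      rw [le_div_iff₀ (by linarith)]
      nlinarith [mul_nonneg (neg_nonneg.2 ha) (sq_nonneg a)]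
    linarith

theorem lintegral_exp_neg_mul_sq {b : ℝ} (hb : 0 < b) :
    ∫⁻ x : ℝ, ENNReal.ofReal (Real.exp (-b * x ^ 2)) = ENNReal.ofReal (√(π / b)) := by
  rw [← integral_gaussian, ofReal_integral_eq_lintegral_ofReal (integrable_exp_neg_mul_sq hb)
    (ae_of_all _ fun x => (Real.exp_pos _).le)]

theorem lintegral_exp_mul_sq_le {a b : ℝ} (hab : |a| ≤ b) (hb : b < 1 / 2) :
    ∫⁻ x : ℝ, ENNReal.ofReal ((√(2 * π))⁻¹ * Real.exp (-(1 / 2 - a) * x ^ 2)) ≤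
      ENNReal.ofReal (Real.exp (a + a ^ 2 / (1 - 2 * b))) := by
  have ha : 0 < 1 - 2 * a := by linarith [(abs_le.1 hab).2]
  simp_rw [ENNReal.ofReal_mul (inv_nonneg.2 (Real.sqrt_nonneg (2 * π)))]
  rw [lintegral_const_mul _ (by fun_prop), lintegral_exp_neg_mul_sq (by linarith),
    ← ENNReal.ofReal_mul (by positivity)]
  apply ENNReal.ofReal_le_ofReal
  refine le_trans (le_of_eq ?_) (Real.exp_le_exp.2 (neg_half_log_one_sub_le hab hb))
  rw [← Real.sqrt_inv, ← Real.sqrt_mul (by positivity), Real.sqrt_eq_rpow,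
    ← Real.log_rpow ha, Real.exp_log (by positivity), 
    Real.rpow_neg ha.le, ← Real.inv_rpow ha.le]
  congr 1
  field_simp

theorem exists_simultaneous_diagonalization {p : ℕ} {C B : Matrix (Fin p) (Fin p) ℝ}
    (hC : C.PosSemidef) (hB : B.IsSymm) :
    ∃ (W : Matrix (Fin p) (Fin p) ℝ) (d : Fin p → ℝ), W * Wᵀ = C ∧ Wᵀ * B * W = diagonal d := by
  obtain ⟨D, hD⟩ : ∃ D : Matrix (Fin p) (Fin p) ℝ, C = Dᵀ * D := by
    open scoped MatrixOrder in
    obtain ⟨D, hD⟩ := CStarAlgebra.nonneg_iff_eq_star_mul_self.1 hC.nonneg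
    exact ⟨D, by simpa [star_eq_conjTranspose] using hD⟩
  have hM : (D * B * Dᵀ).IsHermitian := by
    rw [IsHermitian, conjTranspose_eq_transpose_of_trivial]
    simp [hB.eq, Matrix.mul_assoc]
  set U : Matrix (Fin p) (Fin p) ℝ := hM.eigenvectorUnitary.1 with hU
  have hUU : U * Uᵀ = 1 := by
    have := Unitary.coe_mul_star_self hM.eigenvectorUnitary
    simpa [star_eq_conjTranspose] using this
  refine ⟨Dᵀ * U, hM.eigenvalues, ?_, ?_⟩
  · rw [transpose_mul, transpose_transpose, Matrix.mul_assoc, ← Matrix.mul_assoc U, hUU, hD]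
    simp
  · have := hM.conjStarAlgAut_star_eigenvectorUnitary
    simp only [Unitary.conjStarAlgAut_apply, Unitary.coe_star, star_eq_conjTranspose,
      conjTranspose_eq_transpose_of_trivial, ← hU] at this
    simp only [transpose_mul, transpose_transpose, Matrix.mul_assoc] at this ⊢
    exact this

theorem lintegral_comp_mulVec {p : ℕ} {W : Matrix (Fin p) (Fin p) ℝ} (hW : W.det ≠ 0)
    {g : (Fin p → ℝ) → ℝ≥0∞} (hg : Measurable g) :
    ∫⁻ x, g x = ENNReal.ofReal |W.det| * ∫⁻ z, g (W *ᵥ z) := by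
  have h := congrArg (fun μ => ∫⁻ x, g x ∂μ) (Real.map_matrix_volume_pi_eq_smul_volume_pi hW)
  simp only [lintegral_smul_measure, smul_eq_mul] at h
  rw [lintegral_map hg (LinearMap.continuous_on_pi _).measurable] at h
  simp only [toLin'_apply] at h
  rw [h, ← mul_assoc, ← ENNReal.ofReal_mul (abs_nonneg _), ← abs_mul, mul_inv_cancel₀ hW]
  simp

theorem lintegral_gaussianPDF_mul_exp_le_of_diagonal {p : ℕ} {C B W : Matrix (Fin p) (Fin p) ℝ}
    {d : Fin p → ℝ} (hC : C.PosDef) (hW : W * Wᵀ = C) (hd : Wᵀ * B * W = diagonal d)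
    {η b : ℝ} (hdb : ∀ i, |η * d i| ≤ b) (hb : b < 1 / 2) :
    ∫⁻ x, gaussianPDF C x * ENNReal.ofReal (Real.exp (η * (x ⬝ᵥ B *ᵥ x))) ≤
      ENNReal.ofReal (Real.exp (∑ i, (η * d i + (η * d i) ^ 2 / (1 - 2 * b)))) := by
  have hdet : W.det * W.det = C.det := by rw [← hW, det_mul, det_transpose]
  have hCpos := hC.det_pos
  have hW0 : W.det ≠ 0 := by rintro h; simp [h] at hdet; linarith
  have hWu : IsUnit W.det := hW0.isUnit
  have hinv : Wᵀ * C⁻¹ * W = 1 := by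
    rw [← hW, Matrix.mul_inv_rev, ← Matrix.mul_assoc, Matrix.mul_nonsing_inv _ (by simpa),
      Matrix.one_mul, Matrix.nonsing_inv_mul _ hWu]
  have hquad : ∀ (M : Matrix (Fin p) (Fin p) ℝ) (z : Fin p → ℝ),
      (W *ᵥ z) ⬝ᵥ M *ᵥ (W *ᵥ z) = z ⬝ᵥ (Wᵀ * M * W) *ᵥ z := by
    intro M z
    rw [← mulVec_mulVec, ← mulVec_mulVec, dotProduct_mulVec z, vecMul_transpose]
  rw [lintegral_comp_mulVec hW0 (by unfold gaussianPDF dotProduct mulVec dotProduct; fun_prop),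
    ← lintegral_const_mul _ (by unfold gaussianPDF dotProduct mulVec dotProduct; fun_prop)]
  have key : ∀ z : Fin p → ℝ, ENNReal.ofReal |W.det| * (gaussianPDF C (W *ᵥ z) *
      ENNReal.ofReal (Real.exp (η * ((W *ᵥ z) ⬝ᵥ B *ᵥ (W *ᵥ z))))) =
      ∏ i, ENNReal.ofReal ((√(2 * π))⁻¹ * Real.exp (-(1 / 2 - η * d i) * (z i) ^ 2)) := by
    intro z
    have h1 : |W.det| * C.det ^ (-(1 : ℝ) / 2) = 1 := by
      rw [neg_div, Real.rpow_neg hCpos.le, ← Real.sqrt_eq_rpow, ← hdet, Real.sqrt_mul_self_eq_abs]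
      exact mul_inv_cancel₀ (abs_ne_zero.2 hW0)
    have h2 : (2 * π) ^ (-(p : ℝ) / 2) = ∏ _i : Fin p, (√(2 * π))⁻¹ := by
      rw [Finset.prod_const, Finset.card_univ, Fintype.card_fin, Real.sqrt_eq_rpow,
        ← Real.rpow_neg (by positivity), ← Real.rpow_mul_natCast (by positivity)]
      congr 1
      ring
    rw [← ENNReal.ofReal_prod_of_nonneg (fun i _ => by positivity), gaussianPDF,
      ← ENNReal.ofReal_mul (by positivity), ← ENNReal.ofReal_mul (by positivity), hquad, hquad,
      hinv, hd, Finset.prod_mul_distrib, ← Real.exp_sum, h2]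
    congr 1
    rw [← mul_assoc, mul_comm (∏ _i : Fin p, (√(2 * π))⁻¹), ← mul_assoc, ← mul_assoc, h1, one_mul,
      mul_assoc, ← Real.exp_add]
    congr 2
    simp only [one_mulVec, dotProduct, mulVec_diagonal, Finset.mul_sum, ← Finset.sum_add_distrib]
    exact Finset.sum_congr rfl fun i _ => by ring
  simp_rw [key]
  rw [lintegral_fin_prod_eq_prod (fun i y => ENNReal.ofReal ((√(2 * π))⁻¹ *
    Real.exp (-(1 / 2 - η * d i) * y ^ 2))) (fun i => by fun_prop), Real.exp_sum,
    ENNReal.ofReal_prod_of_nonneg (fun i _ => (Real.exp_pos _).le)]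
  exact Finset.prod_le_prod' fun i _ => lintegral_exp_mul_sq_le (hdb i) hb

theorem transpose_mul_mul_apply_self {p : ℕ} (W M : Matrix (Fin p) (Fin p) ℝ) (i : Fin p) :
    (Wᵀ * M * W) i i = W.col i ⬝ᵥ M *ᵥ W.col i := by
  rw [Matrix.mul_assoc, mul_apply']
  rfl

theorem abs_diagonal_le {p : ℕ} {C B W : Matrix (Fin p) (Fin p) ℝ}
    {d : Fin p → ℝ} (hW : W * Wᵀ = C) (hd : Wᵀ * B * W = diagonal d)
    {L β : ℝ} (hL0 : 0 ≤ L) (hβ : 0 ≤ β) (hL : ∀ x, x ⬝ᵥ C *ᵥ x ≤ L * (x ⬝ᵥ x))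
    (hB : ∀ x, |x ⬝ᵥ B *ᵥ x| ≤ β * (x ⬝ᵥ x)) (i : Fin p) : |d i| ≤ L * β := by
  set w := W.col i
  have hdi : d i = w ⬝ᵥ B *ᵥ w := by
    rw [← transpose_mul_mul_apply_self, hd, diagonal_apply_eq]
  have hq : (Wᵀ *ᵥ w) ⬝ᵥ (Wᵀ *ᵥ w) = w ⬝ᵥ C *ᵥ w := by
    rw [← hW, ← mulVec_mulVec, dotProduct_mulVec w, ← mulVec_transpose]
  have hqi : (w ⬝ᵥ w) ^ 2 ≤ (Wᵀ *ᵥ w) ⬝ᵥ (Wᵀ *ᵥ w) := by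
    have := Finset.single_le_sum (f := fun k => (Wᵀ *ᵥ w) k * (Wᵀ *ᵥ w) k)
      (fun k _ => mul_self_nonneg _) (Finset.mem_univ i)
    rw [sq]
    exact this
  have hN : w ⬝ᵥ w ≤ L := by
    by_contra h
    push Not at h
    have := hL w
    nlinarith
  rw [hdi]
  calc _ ≤ β * (w ⬝ᵥ w) := hB w
    _ ≤ β * L := by gcongr
    _ = L * β := mul_comm _ _

theorem sum_diagonal_sq_le {p : ℕ} {C B W : Matrix (Fin p) (Fin p) ℝ}
    {d : Fin p → ℝ} (hW : W * Wᵀ = C) (hd : Wᵀ * B * W = diagonal d) (hBs : B.IsSymm)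
    {L : ℝ} (hL : ∀ x, x ⬝ᵥ C *ᵥ x ≤ L * (x ⬝ᵥ x)) :
    ∑ i, d i ^ 2 ≤ L * trace (B * B * C) := by
  have hquad : ∀ (M : Matrix (Fin p) (Fin p) ℝ) (z : Fin p → ℝ),
      (B *ᵥ z) ⬝ᵥ M *ᵥ (B *ᵥ z) = z ⬝ᵥ (B * M * B) *ᵥ z := by
    intro M z
    rw [← mulVec_mulVec, ← mulVec_mulVec, dotProduct_mulVec z, ← mulVec_transpose, hBs.eq]
  have hsq : ∀ i, d i ^ 2 = W.col i ⬝ᵥ (B * C * B) *ᵥ W.col i := by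
    intro i
    have : (Wᵀ * (B * C * B) * W) = diagonal d * diagonal d := by
      rw [← hd, ← hW]
      simp only [Matrix.mul_assoc]
    rw [← transpose_mul_mul_apply_self, this, diagonal_mul_diagonal, diagonal_apply_eq, sq]
  have htr : trace (B * B * C) = ∑ i, W.col i ⬝ᵥ (B * 1 * B) *ᵥ W.col i := by
    rw [← hW, ← Matrix.mul_assoc, trace_mul_comm, ← Matrix.mul_assoc, trace]
    exact Finset.sum_congr rfl fun i _ => by
      rw [diag_apply, transpose_mul_mul_apply_self, Matrix.mul_one]
  rw [htr, Finset.mul_sum]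
  refine Finset.sum_le_sum fun i _ => ?_
  rw [hsq, ← hquad, ← hquad, one_mulVec]
  exact hL _

/-- Exponential moment bound for a quadratic form `xᵀ B x` of a centered Gaussian vector. -/
theorem lintegral_gaussianPDF_mul_exp_le {p : ℕ} {C B : Matrix (Fin p) (Fin p) ℝ}
    (hC : C.PosDef) (hBs : B.IsSymm) {L β V η : ℝ} (hL0 : 0 ≤ L) (hβ : 0 ≤ β) (hη : 0 ≤ η)
    (hL : ∀ x, x ⬝ᵥ C *ᵥ x ≤ L * (x ⬝ᵥ x)) (hB : ∀ x, |x ⬝ᵥ B *ᵥ x| ≤ β * (x ⬝ᵥ x))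
    (hV : trace (B * B * C) ≤ V) (hηL : η * (L * β) < 1 / 2) :
    ∫⁻ x, gaussianPDF C x * ENNReal.ofReal (Real.exp (η * (x ⬝ᵥ B *ᵥ x))) ≤
      ENNReal.ofReal (Real.exp (η * trace (B * C) +
        η ^ 2 * (L * V) / (1 - 2 * (η * (L * β))))) := by
  obtain ⟨W, d, hW, hd⟩ := exists_simultaneous_diagonalization hC.posSemidef hBs
  have hden : 0 < 1 - 2 * (η * (L * β)) := by linarith
  refine (lintegral_gaussianPDF_mul_exp_le_of_diagonal hC hW hd (b := η * (L * β))
    (fun i => ?_) hηL).trans (ENNReal.ofReal_le_ofReal (Real.exp_le_exp.2 ?_))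
  · rw [abs_mul, abs_of_nonneg hη]
    exact mul_le_mul_of_nonneg_left (abs_diagonal_le hW hd hL0 hβ hL hB i) hη
  · have htr : trace (B * C) = ∑ i, d i := by
      rw [← hW, ← Matrix.mul_assoc, trace_mul_comm, ← Matrix.mul_assoc, hd, trace_diagonal]
    rw [Finset.sum_add_distrib, ← Finset.mul_sum, ← Finset.sum_div, htr]
    simp only [mul_pow, ← Finset.mul_sum]
    gcongr
    exact (sum_diagonal_sq_le hW hd hBs hL).trans (by gcongr)

/-- Chernoff's bound for the empirical mean of a quadratic form under `iidGaussian`. -/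
theorem iidGaussian_le_exp {n p : ℕ} (C : Matrix (Fin p) (Fin p) ℝ)
    {B : Matrix (Fin p) (Fin p) ℝ} {η a K : ℝ} (hη : 0 ≤ η)
    (hK : ∫⁻ x, gaussianPDF C x * ENNReal.ofReal (Real.exp (η * (x ⬝ᵥ B *ᵥ x))) ≤
      ENNReal.ofReal (Real.exp K)) :
    iidGaussian n p C {X | n * a ≤ ∑ k, X k ⬝ᵥ B *ᵥ X k} ≤
      ENNReal.ofReal (Real.exp (n * (K - η * a))) := by
  have hmeas : Measurable fun X : Fin n → Fin p → ℝ => ∑ k, X k ⬝ᵥ B *ᵥ X k := by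
    unfold dotProduct mulVec dotProduct; fun_prop
  have hset : MeasurableSet {X : Fin n → Fin p → ℝ | n * a ≤ ∑ k, X k ⬝ᵥ B *ᵥ X k} :=
    measurableSet_le measurable_const hmeas
  rw [iidGaussian, withDensity_apply _ hset]
  calc _ ≤ ∫⁻ X in {X : Fin n → Fin p → ℝ | n * a ≤ ∑ k, X k ⬝ᵥ B *ᵥ X k},
        ENNReal.ofReal (Real.exp (-(n * (η * a)))) * ∏ k, (gaussianPDF C (X k) *
          ENNReal.ofReal (Real.exp (η * (X k ⬝ᵥ B *ᵥ X k)))) := by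
        refine setLIntegral_mono' hset fun X hX => ?_
        rw [Finset.prod_mul_distrib, mul_left_comm,
          ← ENNReal.ofReal_prod_of_nonneg (fun i _ => (Real.exp_pos _).le),
          ← ENNReal.ofReal_mul (Real.exp_pos _).le, ← Real.exp_sum, ← Real.exp_add]
        refine le_mul_of_one_le_right' ?_
        rw [ENNReal.one_le_ofReal, Real.one_le_exp_iff, ← Finset.mul_sum]
        have := mul_le_mul_of_nonneg_left (Set.mem_ofPred_eq ▸ hX) hη
        linarith
    _ ≤ ∫⁻ X : Fin n → Fin p → ℝ,
        ENNReal.ofReal (Real.exp (-(n * (η * a)))) * ∏ k, (gaussianPDF C (X k) *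
          ENNReal.ofReal (Real.exp (η * (X k ⬝ᵥ B *ᵥ X k)))) := setLIntegral_le_lintegral _ _
    _ ≤ ENNReal.ofReal (Real.exp (-(n * (η * a)))) * ENNReal.ofReal (Real.exp K) ^ n := by
        rw [lintegral_const_mul _
          (by unfold gaussianPDF dotProduct mulVec dotProduct; fun_prop)]
        rw [lintegral_fin_prod_eq_prod (fun _ x => gaussianPDF C x *
          ENNReal.ofReal (Real.exp (η * (x ⬝ᵥ B *ᵥ x))))
          (fun i => by unfold gaussianPDF dotProduct mulVec dotProduct; fun_prop)]
        rw [Finset.prod_const, Finset.card_univ, Fintype.card_fin]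
        gcongr
    _ = _ := by
        rw [← ENNReal.ofReal_pow (Real.exp_pos _).le, ← ENNReal.ofReal_mul (Real.exp_pos _).le,
          ← Real.exp_nat_mul, ← Real.exp_add]
        congr 2
        ring

theorem trace_mul_sampleCov {n p : ℕ} (B : Matrix (Fin p) (Fin p) ℝ) (X : Fin n → Fin p → ℝ) :
    trace (B * sampleCov X) = (n : ℝ)⁻¹ * ∑ k, X k ⬝ᵥ B *ᵥ X k := by
  rw [sampleCov, Matrix.mul_smul, trace_smul, Matrix.mul_sum, trace_sum, smul_eq_mul]
  congr 1
  refine Finset.sum_congr rfl fun k _ => ?_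
  simp only [trace, diag_apply, mul_apply, of_apply, dotProduct, mulVec, Finset.mul_sum]
  exact Finset.sum_congr rfl fun i _ => Finset.sum_congr rfl fun j _ => by ring

/-- Choice of the Chernoff parameter. -/
theorem exists_chernoff_parameter {y τ : ℝ} (hy : 0 < y) (h1 : √(4 * y) ≤ τ) (h2 : 8 * y ≤ τ) :
    ∃ φ, 0 ≤ φ ∧ φ < 1 / 2 ∧ φ ^ 2 / 2 / (1 - 2 * φ) - φ * τ ≤ -y := by
  have hs : √(4 * y) = 2 * √y := by
    rw [Real.sqrt_mul (by norm_num), show (4 : ℝ) = 2 ^ 2 by norm_num, Real.sqrt_sq (by norm_num)]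
  have hsq := Real.sq_sqrt hy.le
  have hpos := Real.sqrt_pos.2 hy
  rw [hs] at h1
  rcases le_total (√y) (1 / 4) with h | h
  · refine ⟨√y, hpos.le, by linarith, ?_⟩
    have : √y ^ 2 / 2 / (1 - 2 * √y) ≤ √y ^ 2 := by
      rw [div_le_iff₀ (by linarith)]
      nlinarith [sq_nonneg (√y)]
    nlinarith
  · refine ⟨1 / 4, by norm_num, by norm_num, ?_⟩
    norm_num
    nlinarith

/-- Upper tail bound for `Tr(B Σ_n)` around its mean `Tr(B C)`. -/
theorem iidGaussian_trace_tail_le {n p : ℕ} (hn : 0 < n) {C B : Matrix (Fin p) (Fin p) ℝ}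
    (hC : C.PosDef) (hBs : B.IsSymm) {L β τ x : ℝ} (hL0 : 0 < L) (hβ : 0 < β) (hx : 0 < x)
    (hL : ∀ x, x ⬝ᵥ C *ᵥ x ≤ L * (x ⬝ᵥ x)) (hB : ∀ x, |x ⬝ᵥ B *ᵥ x| ≤ β * (x ⬝ᵥ x))
    (hV : trace (B * B * C) ≤ β / 2) (h1 : √(4 * (x * (L * β) / n)) ≤ τ)
    (h2 : 8 * (x * (L * β) / n) ≤ τ) :
    iidGaussian n p C {X | τ + trace (B * C) ≤ trace (B * sampleCov X)} ≤
      ENNReal.ofReal (Real.exp (-x)) := by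
  have hn' : (0 : ℝ) < n := by exact_mod_cast hn
  obtain ⟨φ, hφ0, hφ, hle⟩ := exists_chernoff_parameter (by positivity) h1 h2
  have hη : φ / (L * β) * (L * β) = φ := by field_simp
  have hK := lintegral_gaussianPDF_mul_exp_le hC hBs hL0.le hβ.le (η := φ / (L * β))
    (by positivity) hL hB hV (by rwa [hη])
  have hmain := iidGaussian_le_exp (n := n) C (a := τ + trace (B * C)) (by positivity) hK
  have hset : {X : Fin n → Fin p → ℝ | τ + trace (B * C) ≤ trace (B * sampleCov X)} =
      {X | n * (τ + trace (B * C)) ≤ ∑ k, X k ⬝ᵥ B *ᵥ X k} := by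
    ext X
    rw [Set.mem_ofPred_eq, Set.mem_ofPred_eq, trace_mul_sampleCov, inv_mul_eq_div,
      le_div_iff₀' hn']
  rw [hset]
  refine hmain.trans (ENNReal.ofReal_le_ofReal (Real.exp_le_exp.2 ?_))
  rw [hη]
  have hden : 1 - 2 * φ ≠ 0 := by linarith
  have := mul_le_mul_of_nonneg_left hle (show 0 ≤ n / (L * β) by positivity)
  calc _ = n / (L * β) * (φ ^ 2 / 2 / (1 - 2 * φ) - φ * τ) := by field_simp; ring
    _ ≤ _ := this
    _ = _ := by field_simp

theorem abs_dotProduct_mulVec_le_of_row_sum_le {p : ℕ} {B : Matrix (Fin p) (Fin p) ℝ}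
    (hB : B.IsSymm) {R : ℝ} (hR : ∀ i, ∑ j, |B i j| ≤ R) (x : Fin p → ℝ) :
    |x ⬝ᵥ B *ᵥ x| ≤ R * (x ⬝ᵥ x) := by
  have hsym : ∑ i, ∑ j, |B i j| * (x j * x j) = ∑ i, ∑ j, |B i j| * (x i * x i) := by
    rw [Finset.sum_comm]
    exact Finset.sum_congr rfl fun i _ => Finset.sum_congr rfl fun j _ => by rw [hB.apply]
  calc |x ⬝ᵥ B *ᵥ x| = |∑ i, ∑ j, x i * (B i j * x j)| := by
        simp only [dotProduct, mulVec, Finset.mul_sum]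
    _ ≤ ∑ i, ∑ j, |x i * (B i j * x j)| :=
        (Finset.abs_sum_le_sum_abs _ _).trans
          (Finset.sum_le_sum fun i _ => Finset.abs_sum_le_sum_abs _ _)
    _ ≤ ∑ i, ∑ j, (1 / 2 * (|B i j| * (x i * x i)) + 1 / 2 * (|B i j| * (x j * x j))) := by
        refine Finset.sum_le_sum fun i _ => Finset.sum_le_sum fun j _ => ?_
        rw [abs_mul, abs_mul, ← abs_mul_abs_self (x i), ← abs_mul_abs_self (x j)]
        nlinarith [mul_nonneg (abs_nonneg (B i j)) (sq_nonneg (|x i| - |x j|))]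
    _ = ∑ i, (∑ j, |B i j|) * (x i * x i) := by
        simp only [Finset.sum_add_distrib, ← Finset.mul_sum, hsym, Finset.sum_mul]
        ring
    _ ≤ ∑ i, R * (x i * x i) :=
        Finset.sum_le_sum fun i _ => mul_le_mul_of_nonneg_right (hR i) (mul_self_nonneg _)
    _ = R * (x ⬝ᵥ x) := by rw [dotProduct, Finset.mul_sum]

theorem sum_ite_natAbs_sub_eq_le_two {p : ℕ} (i : Fin p) (d : ℕ) :
    ∑ j : Fin p, (if ((i : ℤ) - (j : ℤ)).natAbs = d then (1 : ℝ) else 0) ≤ 2 := by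
  rw [Finset.sum_boole]
  have hcard : (Finset.univ.filter fun j : Fin p => ((i : ℤ) - (j : ℤ)).natAbs = d).card ≤
      ({(i : ℕ) + d, (i : ℕ) - d} : Finset ℕ).card := by
    refine Finset.card_le_card_of_injOn (fun j => (j : ℕ)) (fun j hj => ?_)
      (fun a _ b _ h => Fin.ext h)
    simp only [Finset.coe_filter, Finset.mem_univ, true_and, Set.mem_ofPred_eq] at hj
    simp only [Finset.coe_insert, Finset.coe_singleton, Set.mem_insert_iff,
      Set.mem_singleton_iff]
    omega
  exact_mod_cast hcard.trans Finset.card_le_two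

theorem sum_ite_natAbs_sub_eq_zero {p : ℕ} (i : Fin p) :
    ∑ j : Fin p, (if ((i : ℤ) - (j : ℤ)).natAbs = 0 then (1 : ℝ) else 0) = 1 := by
  rw [Finset.sum_eq_single i (fun j _ hj => if_neg fun h => hj (Fin.ext (by omega))) (by simp)]
  simp

theorem sum_sum_ite_val_eq_add {p j : ℕ} (hjp : j ≤ p) :
    ∑ k : Fin p, ∑ l : Fin p, (if (l : ℕ) = k + j then (1 : ℝ) else 0) = p - j := by
  have hinner : ∀ k : Fin p, ∑ l : Fin p, (if (l : ℕ) = k + j then (1 : ℝ) else 0) =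
      if (k : ℕ) + j < p then 1 else 0 := by
    intro k
    rw [Fin.sum_univ_eq_sum_range (fun l => if l = (k : ℕ) + j then (1 : ℝ) else 0),
      Finset.sum_ite_eq']
    simp
  simp_rw [hinner]
  rw [Fin.sum_univ_eq_sum_range (fun k => if k + j < p then (1 : ℝ) else 0), Finset.sum_boole,
    show (Finset.range p).filter (fun k => k + j < p) = Finset.range (p - j) by
      ext k; simp only [Finset.mem_filter, Finset.mem_range]; omega,
    Finset.card_range, Nat.cast_sub hjp]

theorem sum_sum_ite_natAbs_sub_eq {p j : ℕ} (hj : 1 ≤ j) (hjp : j ≤ p) :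
    ∑ k : Fin p, ∑ l : Fin p, (if ((k : ℤ) - (l : ℤ)).natAbs = j then (1 : ℝ) else 0) =
      2 * (p - j) := by
  have hsplit : ∀ k l : Fin p, (if ((k : ℤ) - (l : ℤ)).natAbs = j then (1 : ℝ) else 0) =
      (if (l : ℕ) = k + j then 1 else 0) + (if (k : ℕ) = l + j then 1 else 0) := by
    intro k l
    by_cases h1 : (l : ℕ) = k + j
    · rw [if_pos (by omega), if_pos h1, if_neg (by omega), add_zero]
    · by_cases h2 : (k : ℕ) = l + j
      · rw [if_pos (by omega), if_neg h1, if_pos h2, zero_add]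
      · rw [if_neg (by omega), if_neg h1, if_neg h2, add_zero]
  simp_rw [hsplit, Finset.sum_add_distrib]
  rw [Finset.sum_comm (f := fun k l : Fin p => if (k : ℕ) = l + j then (1 : ℝ) else 0),
    sum_sum_ite_val_eq_add hjp]
  ring

theorem lagMatrix_apply_eq_mul {p j : ℕ} (k l : Fin p) : lagMatrix p j k l =
    1 / (2 * ((p : ℝ) - j)) * if ((k : ℤ) - (l : ℤ)).natAbs = j then (1 : ℝ) else 0 := by
  simp [lagMatrix]

theorem lagMatrix_isSymm (p j : ℕ) : (lagMatrix p j).IsSymm := by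
  ext k l
  simp only [transpose_apply, lagMatrix, of_apply]
  rw [← Int.natAbs_neg, neg_sub]

theorem abs_dotProduct_lagMatrix_mulVec_le {p j : ℕ} (hjp : j < p) (x : Fin p → ℝ) :
    |x ⬝ᵥ lagMatrix p j *ᵥ x| ≤ 1 / ((p : ℝ) - j) * (x ⬝ᵥ x) := by
  have hpos : (0 : ℝ) < p - j := sub_pos.2 (by exact_mod_cast hjp)
  refine abs_dotProduct_mulVec_le_of_row_sum_le (lagMatrix_isSymm p j) (fun i => ?_) x
  have habs : ∀ l, |lagMatrix p j i l| = lagMatrix p j i l := fun l =>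
    abs_of_nonneg (by rw [lagMatrix_apply_eq_mul]; split_ifs <;> positivity)
  simp_rw [habs, lagMatrix_apply_eq_mul, ← Finset.mul_sum]
  calc _ ≤ 1 / (2 * ((p : ℝ) - j)) * 2 := by
        gcongr
        exact sum_ite_natAbs_sub_eq_le_two i j
    _ = _ := by field_simp

theorem trace_lagMatrix_mul_toeplitz {p j : ℕ} (hj : 1 ≤ j) (hjp : j < p)
    {C : Matrix (Fin p) (Fin p) ℝ} {v : ℕ → ℝ}
    (hv : ∀ i k : Fin p, C i k = v ((i : ℤ) - (k : ℤ)).natAbs) :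
    trace (lagMatrix p j * C) = v j := by
  have hpos : (0 : ℝ) < p - j := sub_pos.2 (by exact_mod_cast hjp)
  have hterm : ∀ k l : Fin p, lagMatrix p j k l * C l k = v j / (2 * ((p : ℝ) - j)) *
      if ((k : ℤ) - (l : ℤ)).natAbs = j then (1 : ℝ) else 0 := by
    intro k l
    rw [lagMatrix_apply_eq_mul, hv]
    split_ifs with h
    · rw [show ((l : ℤ) - (k : ℤ)).natAbs = j by omega]
      ring
    · simp
  simp only [trace, diag_apply, mul_apply, hterm, ← Finset.mul_sum]
  rw [sum_sum_ite_natAbs_sub_eq hj hjp.le]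
  field_simp

theorem trace_lagMatrix_mul_lagMatrix_mul_toeplitz {p j : ℕ} (hj : 1 ≤ j) (hjp : j < p)
    {C : Matrix (Fin p) (Fin p) ℝ} {v : ℕ → ℝ}
    (hv : ∀ i k : Fin p, C i k = v ((i : ℤ) - (k : ℤ)).natAbs) (hv0 : v 0 = 1)
    (hv2 : v (2 * j) = 0) :
    trace (lagMatrix p j * lagMatrix p j * C) = 1 / (p - j) / 2 := by
  have hpos : (0 : ℝ) < p - j := sub_pos.2 (by exact_mod_cast hjp)
  have hterm : ∀ k m l : Fin p, lagMatrix p j k l * lagMatrix p j l m * C m k =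
      if m = k then (1 / (2 * ((p : ℝ) - j))) ^ 2 *
        (if ((k : ℤ) - (l : ℤ)).natAbs = j then (1 : ℝ) else 0) else 0 := by
    intro k m l
    rw [lagMatrix_apply_eq_mul, lagMatrix_apply_eq_mul, hv]
    by_cases hmk : m = k
    · subst hmk
      rw [if_pos rfl, sub_self, Int.natAbs_zero, hv0]
      by_cases h : ((m : ℤ) - (l : ℤ)).natAbs = j
      · rw [if_pos h, if_pos (by omega)]
        ring
      · rw [if_neg h]
        ring
    · rw [if_neg hmk]
      have hne : (m : ℕ) ≠ k := fun h => hmk (Fin.ext h)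
      by_cases h : ((k : ℤ) - (l : ℤ)).natAbs = j
      · by_cases h' : ((l : ℤ) - (m : ℤ)).natAbs = j
        · rw [show ((m : ℤ) - (k : ℤ)).natAbs = 2 * j by omega, hv2, mul_zero]
        · rw [if_neg h']
          ring
      · rw [if_neg h]
        ring
  simp only [trace, diag_apply, mul_apply, Finset.sum_mul, hterm]
  have hsum : ∀ k : Fin p, ∑ m : Fin p, ∑ l : Fin p, (if m = k then
      (1 / (2 * ((p : ℝ) - j))) ^ 2 *
        (if ((k : ℤ) - (l : ℤ)).natAbs = j then (1 : ℝ) else 0) else 0) =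
      (1 / (2 * ((p : ℝ) - j))) ^ 2 *
        ∑ l : Fin p, (if ((k : ℤ) - (l : ℤ)).natAbs = j then (1 : ℝ) else 0) := by
    intro k
    rw [Finset.sum_comm, Finset.mul_sum]
    exact Finset.sum_congr rfl fun l _ => by rw [Finset.sum_ite_eq']; simp
  simp_rw [hsum]
  rw [← Finset.mul_sum, sum_sum_ite_natAbs_sub_eq hj hjp.le]
  field_simp

theorem abs_apply_le_one_of_posSemidef {p : ℕ} {C : Matrix (Fin p) (Fin p) ℝ}
    (hC : C.PosSemidef) (hdiag : ∀ i, C i i = 1) (i j : Fin p) : |C i j| ≤ 1 := by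
  have hsym : C j i = C i j := by simpa using hC.1.apply i j
  have hquad : ∀ c : ℝ, 0 ≤ 1 + 2 * c * C i j + c ^ 2 := by
    intro c
    have h := hC.dotProduct_mulVec_nonneg (Pi.single i 1 + c • Pi.single j 1)
    simp only [star_trivial, mulVec_add, mulVec_smul, dotProduct_add, add_dotProduct,
      smul_dotProduct, dotProduct_smul, mulVec_single_one, single_one_dotProduct, col_apply,
      smul_eq_mul, hdiag, hsym] at h
    linarith
  rw [abs_le]
  constructor
  · linarith [hquad 1]
  · linarith [hquad (-1)]

theorem dotProduct_toeplitz_mulVec_le {p : ℕ} {C : Matrix (Fin p) (Fin p) ℝ} {v : ℕ → ℝ}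
    (hC : C.PosSemidef) (hv : ∀ i k : Fin p, C i k = v ((i : ℤ) - (k : ℤ)).natAbs)
    (hv0 : v 0 = 1) {T : Finset ℕ} (hT : ∀ j, 1 ≤ j → j ≤ p - 1 → j ∉ T → v j = 0)
    (x : Fin p → ℝ) : x ⬝ᵥ C *ᵥ x ≤ (2 * T.card + 1) * (x ⬝ᵥ x) := by
  have hdiag : ∀ i, C i i = 1 := fun i => by rw [hv, sub_self, Int.natAbs_zero, hv0]
  have hsymm : C.IsSymm := by
    ext k l
    rw [transpose_apply, hv, hv, ← Int.natAbs_neg, neg_sub]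
  refine (le_abs_self _).trans (abs_dotProduct_mulVec_le_of_row_sum_le hsymm (fun i => ?_) x)
  calc ∑ j, |C i j| ≤ ∑ j : Fin p, ((if ((i : ℤ) - (j : ℤ)).natAbs = 0 then (1 : ℝ) else 0) +
        ∑ d ∈ T, if ((i : ℤ) - (j : ℤ)).natAbs = d then (1 : ℝ) else 0) := by
        refine Finset.sum_le_sum fun j _ => ?_
        have h1 := abs_apply_le_one_of_posSemidef hC hdiag i j
        rw [Finset.sum_ite_eq]
        by_cases h0 : ((i : ℤ) - (j : ℤ)).natAbs = 0
        · rw [if_pos h0]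
          split_ifs <;> linarith
        · by_cases hmem : ((i : ℤ) - (j : ℤ)).natAbs ∈ T
          · rw [if_neg h0, if_pos hmem]
            linarith
          · rw [hv, hT _ (by omega) (by omega) hmem]
            simp [h0, hmem]
    _ ≤ 1 + ∑ _d ∈ T, (2 : ℝ) := by
        rw [Finset.sum_add_distrib, sum_ite_natAbs_sub_eq_zero, Finset.sum_comm]
        gcongr with d _
        exact sum_ite_natAbs_sub_eq_le_two i d
    _ = 2 * T.card + 1 := by
        rw [Finset.sum_const, nsmul_eq_mul]
        ring

/-- Tail bound for the empirical lag-`j` autocovariance, when lag `2 * j` is uncorrelated. -/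
theorem iidGaussian_lagMatrix_tail_le {n p j : ℕ} (hn : 0 < n) (hj : 1 ≤ j)
    {C : Matrix (Fin p) (Fin p) ℝ} {v : ℕ → ℝ} (hC : C.PosDef)
    (hv : ∀ i k : Fin p, C i k = v ((i : ℤ) - (k : ℤ)).natAbs) (hv0 : v 0 = 1)
    (hv2 : v (2 * j) = 0) {L q x ε τ : ℝ} (hL0 : 0 < L) (hq : 0 < q) (hjq : q ≤ p - j)
    (hx : 0 < x) (hε : ε * ε = 1) (hL : ∀ x, x ⬝ᵥ C *ᵥ x ≤ L * (x ⬝ᵥ x))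
    (h1 : √(4 * x * L / (n * q)) ≤ τ) (h2 : 8 * x * L / (n * q) ≤ τ) :
    iidGaussian n p C {X | τ ≤ ε * (trace (lagMatrix p j * sampleCov X) - v j)} ≤
      ENNReal.ofReal (Real.exp (-x)) := by
  have hjp : j < p := by
    have : (j : ℝ) < p := by linarith
    exact_mod_cast this
  have hn' : (0 : ℝ) < n := by exact_mod_cast hn
  have hβ : 1 / ((p : ℝ) - j) ≤ 1 / q := one_div_le_one_div_of_le hq hjq
  have hdot : ∀ x : Fin p → ℝ, 0 ≤ x ⬝ᵥ x := fun x =>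
    Finset.sum_nonneg fun i _ => mul_self_nonneg _
  have hεabs : |ε| = 1 := by
    rcases mul_self_eq_one_iff.1 hε with rfl | rfl <;> simp
  have hmain := iidGaussian_trace_tail_le hn hC (B := ε • lagMatrix p j)
    ((lagMatrix_isSymm p j).smul ε) (β := 1 / q) (τ := τ) hL0 (by positivity) hx hL
    (fun x => by
      rw [smul_mulVec, dotProduct_smul, smul_eq_mul, abs_mul, hεabs, one_mul]
      exact (abs_dotProduct_lagMatrix_mulVec_le hjp x).trans
        (mul_le_mul_of_nonneg_right hβ (hdot x)))
    (by
      rw [smul_mul_smul_comm, hε, one_smul,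
        trace_lagMatrix_mul_lagMatrix_mul_toeplitz hj hjp hv hv0 hv2]
      linarith)
    (le_trans (le_of_eq (by congr 1; field_simp)) h1)
    (le_trans (le_of_eq (by field_simp)) h2)
  refine le_trans (measure_mono fun X hX => ?_) hmain
  rw [Set.mem_ofPred_eq] at hX ⊢
  rw [smul_mul, smul_mul, trace_smul, trace_smul, trace_lagMatrix_mul_toeplitz hj hjp hv,
    smul_eq_mul, smul_eq_mul]
  linarith

theorem one_apply_eq_ite_natAbs_sub {p : ℕ} (i k : Fin p) : (1 : Matrix (Fin p) (Fin p) ℝ) i k =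
    (fun d : ℕ => if d = 0 then (1 : ℝ) else 0) ((i : ℤ) - (k : ℤ)).natAbs := by
  rw [one_apply]
  exact if_congr ⟨fun h => by simp [h], fun h => Fin.ext (by omega)⟩ rfl rfl

theorem trace_lagMatrix_mul_sub_one {p j : ℕ} (hj : 1 ≤ j) (hjp : j < p)
    (M : Matrix (Fin p) (Fin p) ℝ) :
    trace (lagMatrix p j * (M - 1)) = trace (lagMatrix p j * M) := by
  rw [Matrix.mul_sub, trace_sub,
    trace_lagMatrix_mul_toeplitz (C := 1) (v := fun d => if d = 0 then 1 else 0) hj hjp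
      one_apply_eq_ite_natAbs_sub,
    if_neg (by omega), sub_zero]

/-- Type I error of the test with threshold `S * τ`. -/
theorem iidGaussian_one_sum_abs_ge_le {n p S : ℕ} (hn : 0 < n) (hS1 : 1 ≤ S)
    (hSp : S < p) {x τ : ℝ} (hx : 0 < x) (h1 : √(4 * x / (n * ((p : ℝ) - S))) ≤ τ)
    (h2 : 8 * x / (n * ((p : ℝ) - S)) ≤ τ) :
    iidGaussian n p 1 {X | (∑ i ∈ Finset.Icc 1 S,
        |trace (lagMatrix p i * (sampleCov X - 1))|) ≥ S * τ} ≤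
      ENNReal.ofReal (2 * S * Real.exp (-x)) := by
  have hpS : (0 : ℝ) < p - S := sub_pos.2 (by exact_mod_cast hSp)
  have htail : ∀ ε : ℝ, ε * ε = 1 → ∀ i ∈ Finset.Icc 1 S, iidGaussian n p 1
      {X | τ ≤ ε * (trace (lagMatrix p i * sampleCov X) - 0)} ≤
        ENNReal.ofReal (Real.exp (-x)) := by
    intro ε hε i hi
    obtain ⟨hi1, hiS⟩ := Finset.mem_Icc.1 hi
    have hiS' : (i : ℝ) ≤ S := by exact_mod_cast hiS
    have := iidGaussian_lagMatrix_tail_le hn hi1 (p := p) (C := 1)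
      (v := fun d => if d = 0 then 1 else 0) PosDef.one one_apply_eq_ite_natAbs_sub
      (if_pos rfl) (if_neg (by omega)) (L := 1) one_pos hpS (by linarith) hx hε
      (fun x => by rw [one_mulVec, one_mul]) (by simpa using h1) (by simpa using h2)
    simpa only [if_neg (show i ≠ 0 by omega)] using this
  calc _ ≤ iidGaussian n p 1 (⋃ i ∈ Finset.Icc 1 S,
        ({X | τ ≤ 1 * (trace (lagMatrix p i * sampleCov X) - 0)} ∪
          {X | τ ≤ -1 * (trace (lagMatrix p i * sampleCov X) - 0)})) := by
        refine measure_mono fun X hX => ?_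
        rw [Set.mem_ofPred_eq] at hX
        by_contra hnot
        refine absurd hX (not_le.2 ?_)
        have hlt : ∀ i ∈ Finset.Icc 1 S, |trace (lagMatrix p i * (sampleCov X - 1))| < τ := by
          intro i hi
          obtain ⟨hi1, hiS⟩ := Finset.mem_Icc.1 hi
          rw [trace_lagMatrix_mul_sub_one hi1 (by omega)]
          by_contra hge
          refine hnot (Set.mem_biUnion hi ?_)
          rcases le_abs.1 (not_lt.1 hge) with h | h
          · left
            rw [Set.mem_ofPred_eq]
            linarith
          · right
            rw [Set.mem_ofPred_eq]
            linarith
        refine (Finset.sum_lt_sum_of_nonempty (Finset.nonempty_Icc.2 hS1) hlt).trans_le ?_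
        simp
    _ ≤ ∑ i ∈ Finset.Icc 1 S, ENNReal.ofReal (2 * Real.exp (-x)) := by
        refine (measure_biUnion_finset_le _ _).trans (Finset.sum_le_sum fun i hi => ?_)
        refine (measure_union_le _ _).trans ?_
        rw [two_mul, ENNReal.ofReal_add (Real.exp_pos _).le (Real.exp_pos _).le]
        exact add_le_add (htail 1 (by norm_num) i hi) (htail (-1) (by norm_num) i hi)
    _ = _ := by
        rw [Finset.sum_const, Nat.card_Icc, Nat.add_sub_cancel, nsmul_eq_mul,
          ← ENNReal.ofReal_natCast, ← ENNReal.ofReal_mul (Nat.cast_nonneg _)]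
        congr 1
        ring

/-- Type II error of the test with threshold `t`. -/
theorem iidGaussian_sum_abs_lt_le {n p s S : ℕ} (hn : 0 < n) (hs : 1 ≤ s)
    (hSp : 2 * S < p) {x t τ σ : ℝ} (hx : 0 < x) (hσ : t + τ ≤ σ)
    (h1 : √(4 * x * (2 * s + 1) / (n * ((p : ℝ) - S))) ≤ τ)
    (h2 : 8 * x * (2 * s + 1) / (n * ((p : ℝ) - S)) ≤ τ)
    {C : Matrix (Fin p) (Fin p) ℝ} (hC : memF p s S σ 1 C) :
    iidGaussian n p C {X | (∑ i ∈ Finset.Icc 1 S,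
        |trace (lagMatrix p i * (sampleCov X - 1))|) < t} ≤
      ENNReal.ofReal (Real.exp (-x)) := by
  obtain ⟨hpd, v, hv0, hv, T, hTS, hTs, hTσ, hT0⟩ := hC
  have hpS : (0 : ℝ) < p - S := sub_pos.2 (by exact_mod_cast (by omega : S < p))
  have hTne : T.Nonempty := Finset.card_pos.1 (by omega)
  set j := T.max' hTne
  have hjT : j ∈ T := T.max'_mem hTne
  obtain ⟨hj1, hjS⟩ := Finset.mem_Icc.1 (hTS hjT)
  have hjS' : (j : ℝ) ≤ S := by exact_mod_cast hjS
  have h2j : 2 * j ∉ T := fun h => by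
    have := T.le_max' _ h
    omega
  obtain ⟨ε, hε, hεv⟩ : ∃ ε : ℝ, ε * ε = 1 ∧ ε * v j = -|v j| := by
    rcases le_total 0 (v j) with h | h
    · exact ⟨-1, by norm_num, by rw [abs_of_nonneg h]; ring⟩
    · exact ⟨1, by norm_num, by rw [abs_of_nonpos h]; ring⟩
  refine le_trans (measure_mono fun X hX => ?_) (iidGaussian_lagMatrix_tail_le hn hj1 hpd hv hv0
    (hT0 _ (by omega) (by omega) h2j) (L := 2 * s + 1) (by positivity) hpS (by linarith) hx hε
    (hTs ▸ dotProduct_toeplitz_mulVec_le hpd.posSemidef hv hv0 hT0) h1 h2)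
  rw [Set.mem_ofPred_eq] at hX ⊢
  have hle : |trace (lagMatrix p j * (sampleCov X - 1))| ≤ ∑ i ∈ Finset.Icc 1 S,
      |trace (lagMatrix p i * (sampleCov X - 1))| :=
    Finset.single_le_sum (f := fun i => |trace (lagMatrix p i * (sampleCov X - 1))|)
      (fun i _ => abs_nonneg _) (hTS hjT)
  rw [trace_lagMatrix_mul_sub_one hj1 (by omega)] at hle
  have hlow : -|trace (lagMatrix p j * sampleCov X)| ≤
      ε * trace (lagMatrix p j * sampleCov X) := by
    rcases mul_self_eq_one_iff.1 hε with rfl | rfl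
    · linarith [neg_abs_le (trace (lagMatrix p j * sampleCov X))]
    · linarith [le_abs_self (trace (lagMatrix p j * sampleCov X))]
  have := hTσ j hjT
  rw [mul_sub, hεv]
  linarith

/-- Risk bound for the two-sided moderately-sparse test `Δ^{MS}`. -/
theorem test_MS_risk {p n s S : ℕ} (hn : 0 < n) (hs : 1 ≤ s) (hsS : s ≤ S)
    (hS2 : 2 ≤ S) (hS : (S : ℝ) < (p:ℝ)/2) (u σ t : ℝ) (hu : 1 < u)
    (ht : t = (S : ℝ) * max (Real.sqrt (4 * u * Real.log S / (n * ((p:ℝ) - S))))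
        (8 * u * Real.log S / (n * ((p:ℝ) - S))))
    (hσ : σ ≥ t + max (Real.sqrt (4 * (u - 1) * (2 * s + 1) * Real.log S / (n * ((p:ℝ) - S))))
        (8 * (u - 1) * (2 * s + 1) * Real.log S / (n * ((p:ℝ) - S)))) :
    (iidGaussian n p 1) {X |
        (∑ i ∈ Finset.Icc 1 S, |Matrix.trace (lagMatrix p i * (sampleCov X - 1))|) ≥ t}
    + ⨆ (Cov : Matrix (Fin p) (Fin p) ℝ) (_ : memF p s S σ 1 Cov),
        (iidGaussian n p Cov) {X |
          (∑ i ∈ Finset.Icc 1 S, |Matrix.trace (lagMatrix p i * (sampleCov X - 1))|) < t}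
    ≤ ENNReal.ofReal (4 * Real.exp (-(u - 1) * Real.log S)) := by
  have hSp : 2 * S < p := by
    have : (2 * S : ℝ) < p := by linarith
    exact_mod_cast this
  have hlog : 0 < Real.log S := Real.log_pos (by exact_mod_cast hS2)
  have hS0 : (0 : ℝ) < S := by exact_mod_cast (by omega : 0 < S)
  have hx : 0 < (u - 1) * Real.log S := mul_pos (by linarith) hlog
  have hI := iidGaussian_one_sum_abs_ge_le (S := S) (p := p) hn (by omega) (by omega)
    (x := u * Real.log S) (mul_pos (by linarith) hlog)
    ((le_of_eq (by congr 2; ring)).trans (le_max_left _ _))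
    ((le_of_eq (by congr 1; ring)).trans (le_max_right
      (Real.sqrt (4 * u * Real.log S / (n * ((p:ℝ) - S)))) (8 * u * Real.log S / (n * ((p:ℝ) - S)))))
  rw [← ht] at hI
  have hII : ∀ Cov, memF p s S σ 1 Cov → iidGaussian n p Cov {X |
      (∑ i ∈ Finset.Icc 1 S, |Matrix.trace (lagMatrix p i * (sampleCov X - 1))|) < t} ≤
      ENNReal.ofReal (Real.exp (-((u - 1) * Real.log S))) := fun Cov hCov =>
    iidGaussian_sum_abs_lt_le hn hs hSp hx hσ
      ((le_of_eq (by congr 2; ring)).trans (le_max_left _ _))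
      ((le_of_eq (by congr 1; ring)).trans (le_max_right _ _)) hCov
  refine (add_le_add hI (iSup₂_le hII)).trans ?_
  have hexp : S * Real.exp (-(u * Real.log S)) = Real.exp (-(u - 1) * Real.log S) := by
    rw [show -(u - 1) * Real.log S = Real.log S + -(u * Real.log S) by ring, Real.exp_add,
      Real.exp_log hS0]
  rw [mul_assoc, hexp, ← neg_mul, ← ENNReal.ofReal_add (by positivity) (by positivity)]
  apply ENNReal.ofReal_le_ofReal
  linarith [Real.exp_pos (-(u - 1) * Real.log S)]
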